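/- arXiv:2101.03984 — 2 statements merged into one kernel-verified Lean document; each statement's English description precedes it below -/
import Mathlib

section
/- For all u₀, u₁, u₂, u₃ ∈ ℝ⁸ one has Φ(u₀,u₁,u₂,u₃)² + 8·Σ_{μ=1}^{7} ( λ⁴(e^μ)(u₀,u₁,u₂,u₃) )² = ‖u₀♭∧u₁♭∧u₂♭∧u₃♭‖², i.e. |Φ(u₀,u₁,u₂,u₃)|² + 8|τ(u₀,u₁,u₂,u₃)|² = |u₀∧u₁∧u₂∧u₃|². -/
open scoped BigOperators

noncomputable section

namespace FMpaper

variable {K : Type*} [NormedField K] [NormedAlgebra ℝ K]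

/-- Coefficient model for the exterior algebra of `(ℝⁿ)*` with scalars in `K`:
a form is given by its coefficients on the basis `e^S`, `S ⊆ {0, …, n-1}` sorted. -/
abbrev Form (K : Type*) (n : ℕ) := Finset (Fin n) → K

variable {n : ℕ}

/-- Sign such that `e^s ∧ e^t = signMerge s t • e^(s ∪ t)` for disjoint sorted `s, t`. -/
def signMerge (s t : Finset (Fin n)) : K :=
  (-1 : K) ^ (((s ×ˢ t).filter (fun p => p.2 < p.1)).card)

/-- Wedge product. -/
def wedge (α β : Form K n) : Form K n :=
  fun u => ∑ s ∈ u.powerset, signMerge s (u \ s) * α s * β (u \ s)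

/-- Hodge star operator (for the standard inner product and orientation `e^{0⋯(n-1)}`). -/
def hstar (α : Form K n) : Form K n :=
  fun t => signMerge tᶜ t * α tᶜ

/-- Interior product with the basis vector `e_μ`. -/
def iprodB (μ : Fin n) (α : Form K n) : Form K n :=
  fun t => if μ ∈ t then 0
    else (-1 : K) ^ ((t.filter (fun j => j < μ)).card) * α (insert μ t)

/-- Interior product with the vector `v`. -/
def iprod (v : Fin n → K) (α : Form K n) : Form K n :=
  fun t => ∑ μ, v μ * iprodB μ α t

/-- The basis covector `e^i` as a 1-form. -/
def e1 (i : Fin n) : Form K n := fun s => if s = {i} then 1 else 0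

/-- The covector `v♭` dual to a vector `v`. -/
def flat (v : Fin n → K) : Form K n := ∑ i, v i • e1 i

/-- The vector `α♯` dual to a 1-form `α`. -/
def sharp1 (α : Form K n) : Fin n → K := fun i => α {i}

/-- The inner product of forms (extended `K`-bilinearly). -/
def inner' (α β : Form K n) : K := ∑ s, α s * β s

/-- The (Euclidean) norm of a form; for an `√-1 ℝ`-valued form `√-1 γ` this is `‖γ‖`. -/
def fnorm (α : Form K n) : ℝ := Real.sqrt (∑ s, ‖α s‖ ^ 2)

/-- `α` is homogeneous of degree `k`. -/
def isGrade (k : ℕ) (α : Form K n) : Prop := ∀ s, s.card ≠ k → α s = 0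

/-- Evaluation of a `k`-form on `k` vectors. -/
def evalForm {k : ℕ} (α : Form K n) (v : Fin k → (Fin n → K)) : K :=
  ∑ s : Finset (Fin n), α s *
    (if h : s.card = k then
      Matrix.det (Matrix.of fun i j => v i ((s.orderIsoOfFin h j : Fin n))) else 0)

/-- The matrix of the skew-symmetric endomorphism `γ♯` associated with a 2-form `γ`
via `⟨γ♯ u, v⟩ = γ(u, v)`. -/
def mat2 (γ : Form K n) : Matrix (Fin n) (Fin n) K :=
  Matrix.of fun i j => if i < j then γ {i, j} else if j < i then - γ {i, j} else 0

/-- The standard `G₂` 3-form `φ = e^{123}+e^{145}+e^{167}+e^{246}−e^{257}−e^{347}−e^{356}`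
on `ℝ⁷` (indices `1, …, 7` shifted to `0, …, 6`). -/
def phi7 : Form K 7 := fun s =>
  if s = ({0, 1, 2} : Finset (Fin 7)) then 1
  else if s = ({0, 3, 4} : Finset (Fin 7)) then 1
  else if s = ({0, 5, 6} : Finset (Fin 7)) then 1
  else if s = ({1, 3, 5} : Finset (Fin 7)) then 1
  else if s = ({1, 4, 6} : Finset (Fin 7)) then -1
  else if s = ({2, 3, 6} : Finset (Fin 7)) then -1
  else if s = ({2, 4, 5} : Finset (Fin 7)) then -1
  else 0

/-- `*₇φ = e^{4567}+e^{2367}+e^{2345}+e^{1357}−e^{1346}−e^{1256}−e^{1247}` on `ℝ⁷`. -/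
def psi7 : Form K 7 := fun s =>
  if s = ({3, 4, 5, 6} : Finset (Fin 7)) then 1
  else if s = ({1, 2, 5, 6} : Finset (Fin 7)) then 1
  else if s = ({1, 2, 3, 4} : Finset (Fin 7)) then 1
  else if s = ({0, 2, 4, 6} : Finset (Fin 7)) then 1
  else if s = ({0, 2, 3, 5} : Finset (Fin 7)) then -1
  else if s = ({0, 1, 4, 5} : Finset (Fin 7)) then -1
  else if s = ({0, 1, 3, 6} : Finset (Fin 7)) then -1
  else 0

/-- The `G₂` 3-form `φ` on `V = span{e₁, …, e₇} ⊂ ℝ⁸`, regarded as a form on `ℝ⁸`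
annihilated by `i(e₀)` (indices `1, …, 7` of `ℝ⁸`). -/
def phi8 : Form K 8 := fun s =>
  if s = ({1, 2, 3} : Finset (Fin 8)) then 1
  else if s = ({1, 4, 5} : Finset (Fin 8)) then 1
  else if s = ({1, 6, 7} : Finset (Fin 8)) then 1
  else if s = ({2, 4, 6} : Finset (Fin 8)) then 1
  else if s = ({2, 5, 7} : Finset (Fin 8)) then -1
  else if s = ({3, 4, 7} : Finset (Fin 8)) then -1
  else if s = ({3, 5, 6} : Finset (Fin 8)) then -1
  else 0

/-- `*₇φ` on `V ⊂ ℝ⁸`, regarded as a 4-form on `ℝ⁸` annihilated by `i(e₀)`. -/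
def psi8 : Form K 8 := fun s =>
  if s = ({4, 5, 6, 7} : Finset (Fin 8)) then 1
  else if s = ({2, 3, 6, 7} : Finset (Fin 8)) then 1
  else if s = ({2, 3, 4, 5} : Finset (Fin 8)) then 1
  else if s = ({1, 3, 5, 7} : Finset (Fin 8)) then 1
  else if s = ({1, 3, 4, 6} : Finset (Fin 8)) then -1
  else if s = ({1, 2, 5, 6} : Finset (Fin 8)) then -1
  else if s = ({1, 2, 4, 7} : Finset (Fin 8)) then -1
  else 0

/-- The standard Cayley 4-form `Φ = e⁰ ∧ φ + *₇φ` on `ℝ⁸`. -/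
def Phi8 : Form K 8 := wedge (e1 0) phi8 + psi8

/-- The index set of `V = span{e₁, …, e₇} ⊂ ℝ⁸`. -/
def Vset : Finset (Fin 8) := {1, 2, 3, 4, 5, 6, 7}

/-- The Hodge star `*₇` of `V ⊂ ℝ⁸` (volume form `e^{1⋯7}`), acting on forms on `ℝ⁸`
annihilated by `i(e₀)`. -/
def star7 (α : Form K 8) : Form K 8 :=
  fun t => if (0 : Fin 8) ∈ t then 0 else signMerge (Vset \ t) t * α (Vset \ t)

/-- `α` is (the pullback of) a form on `V`, i.e. `i(e₀) α = 0`. -/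
def onV (α : Form K 8) : Prop := ∀ s, (0 : Fin 8) ∈ s → α s = 0

/-- `λ²(α) = ½ (e⁰ ∧ α + i(α♯) φ)` for `α ∈ V*`. -/
def lambda2 (α : Form K 8) : Form K 8 :=
  (2 : K)⁻¹ • (wedge (e1 0) α + iprod (sharp1 α) phi8)

/-- `λ⁴(α) = (1/√8) (e⁰ ∧ i(α♯) *₇φ − α ∧ φ)` for `α ∈ V*`. -/
def lambda4 (α : Form K 8) : Form K 8 :=
  (algebraMap ℝ K (Real.sqrt 8))⁻¹ • (wedge (e1 0) (iprod (sharp1 α) psi8) - wedge α phi8)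

/-- `λ⁶(α) = *₈ λ²(α)` for `α ∈ V*`. -/
def lambda6 (α : Form K 8) : Form K 8 := hstar (lambda2 α)

/-- The projection `π²₇(α) = (α + *₈(Φ ∧ α))/4` onto `Λ²₇`. -/
def pi27 (α : Form K 8) : Form K 8 := (4 : K)⁻¹ • (α + hstar (wedge Phi8 α))

/-- The projection `π⁴₇(β) = Σ_{μ=1}^{7} ⟨β, λ⁴(e^μ)⟩ λ⁴(e^μ)` onto `Λ⁴₇`. -/
def pi47 (β : Form K 8) : Form K 8 :=
  ∑ μ : Fin 7, inner' β (lambda4 (e1 μ.succ)) • lambda4 (e1 μ.succ)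

/-- `τ(u₀,u₁,u₂,u₃) = Σ_{μ=1}^{7} λ⁴(e^μ)(u₀,u₁,u₂,u₃) ⬝ λ⁴(e^μ) = π⁴₇(u₀♭∧u₁♭∧u₂♭∧u₃♭)`. -/
def tau4 (u : Fin 4 → (Fin 8 → K)) : Form K 8 :=
  ∑ μ : Fin 7, evalForm (lambda4 (e1 μ.succ)) u • lambda4 (e1 μ.succ)

/-- Partial derivative `∂f^a/∂x^j` at `x`. -/
def pd {m p : ℕ} (f : (Fin m → ℝ) → (Fin p → ℝ)) (x : Fin m → ℝ) (j : Fin m) (a : Fin p) : ℝ :=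
  fderiv ℝ f x (Pi.single j 1) a

/-!
The forms `Φ` and `√8 λ⁴(e^μ)` are the components of the fourfold cross product of Harvey and Lawson
on the octonions, the alternation of `-((x ȳ) z) w̄`. On pairwise orthogonal vectors it equals
`-((x ȳ) z) w̄` itself, so there its norm is the product of the norms, the octonion norm being
multiplicative. By Gram–Schmidt, any quadruple is a unitriangular combination of a pairwise
orthogonal one; an alternating map and the Gram determinant are both unchanged by such a
substitution, and for orthogonal vectors the Gram determinant is the product of the squared norms.
The squared norm of `u₀♭ ∧ u₁♭ ∧ u₂♭ ∧ u₃♭` is the Gram determinant of `u`.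
-/

section Orthogonalization

open scoped InnerProductSpace
open Matrix InnerProductSpace

theorem alternatingMap_sum_smul {ι R M N : Type*} [Fintype ι] [DecidableEq ι] [CommRing R]
    [AddCommGroup M] [Module R M] [AddCommGroup N] [Module R N] (g : M [⋀^ι]→ₗ[R] N)
    (A : Matrix ι ι R) (v : ι → M) : g (fun i => ∑ j, A i j • v j) = A.det • g v := by
  have hzero (f : ι → ι) (hf : f ∉ Set.range ((↑) : Equiv.Perm ι → ι → ι)) : g (v ∘ f) = 0 := by
    refine g.map_eq_zero_of_not_injective _ fun hv => hf ?_
    exact ⟨Equiv.ofBijective f (Finite.injective_iff_bijective.1 hv.of_comp), rfl⟩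
  calc g (fun i => ∑ j, A i j • v j)
      = ∑ f : ι → ι, (∏ i, A i (f i)) • g (v ∘ f) :=
        (g.toMultilinearMap.map_sum fun i j => A i j • v j).trans <|
          Finset.sum_congr rfl fun f _ => g.toMultilinearMap.map_smul_univ _ _
    _ = ∑ σ : Equiv.Perm ι, (∏ i, A i (σ i)) • g (v ∘ σ) :=
        (Fintype.sum_of_injective _ DFunLike.coe_injective _ _
          (fun f hf => by rw [hzero f hf, smul_zero]) fun _ => rfl).symm
    _ = ∑ σ : Equiv.Perm ι, (Equiv.Perm.sign σ • ∏ i, A i (σ i)) • g v :=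
        Finset.sum_congr rfl fun σ _ => by rw [g.map_perm, smul_comm, smul_assoc]
    _ = A.det • g v := by
        rw [← Finset.sum_smul, ← det_transpose, det_apply]
        rfl

variable {𝕜 E F ι : Type*} [RCLike 𝕜] [NormedAddCommGroup E] [InnerProductSpace 𝕜 E]
  [NormedAddCommGroup F] [NormedSpace 𝕜 F] [Fintype ι]

theorem gram_sum_smul (A : Matrix ι ι 𝕜) (v : ι → E) :
    gram 𝕜 (fun i => ∑ j, A i j • v j) = A.map (starRingEnd 𝕜) * gram 𝕜 v * Aᵀ := by
  ext i j
  simp only [gram_apply, sum_inner, inner_sum, inner_smul_left, inner_smul_right, mul_apply,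
    Finset.sum_mul, Finset.mul_sum, map_apply, transpose_apply]
  refine Finset.sum_congr rfl fun k _ => Finset.sum_congr rfl fun l _ => ?_
  ring

theorem exists_sum_smul_orthogonal [LinearOrder ι] [LocallyFiniteOrderBot ι] (u : ι → E) :
    ∃ (A : Matrix ι ι 𝕜) (v : ι → E), A.det = 1 ∧ (Pairwise fun i j => ⟪v i, v j⟫_𝕜 = 0) ∧
      u = fun i => ∑ j, A i j • v j := by
  let v := gramSchmidt 𝕜 u
  let A : Matrix ι ι 𝕜 := 1 + of fun i j => if j < i then ⟪v j, u i⟫_𝕜 / (‖v j‖ : 𝕜) ^ 2 else 0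
  have hA : A.IsLowerTriangular := fun i j (hij : i < j) => by simp [A, hij.ne, hij.not_gt]
  refine ⟨A, v, ?_, gramSchmidt_pairwise_orthogonal 𝕜 u, ?_⟩
  · rw [det_of_isLowerTriangular A hA]
    simp [A]
  · ext1 i
    rw [gramSchmidt_def'' 𝕜 u i, ← Finset.filter_gt_eq_Iio, Finset.sum_filter]
    simp [A, add_smul, Finset.sum_add_distrib, one_apply, v]

theorem norm_sq_eq_det_gram [LinearOrder ι] [LocallyFiniteOrderBot ι] (g : E [⋀^ι]→ₗ[𝕜] F)
    (hg : ∀ v, (Pairwise fun i j => ⟪v i, v j⟫_𝕜 = 0) → ‖g v‖ = ∏ i, ‖v i‖) (u : ι → E) :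
    ((‖g u‖ ^ 2 : ℝ) : 𝕜) = (gram 𝕜 u).det := by
  obtain ⟨A, v, hA, hv, rfl⟩ := exists_sum_smul_orthogonal (𝕜 := 𝕜) u
  have hgram : gram 𝕜 v = diagonal fun i => ((‖v i‖ ^ 2 : ℝ) : 𝕜) := by
    ext i j
    obtain rfl | hij := eq_or_ne i j
    · simp
    · rw [gram_apply, diagonal_apply_ne _ hij, hv hij]
  have hAstar : (A.map (starRingEnd 𝕜)).det = 1 := by
    rw [← RingHom.mapMatrix_apply, ← RingHom.map_det, hA, map_one]
  rw [alternatingMap_sum_smul, gram_sum_smul, det_mul, det_mul, det_transpose, hAstar, hA, one_smul,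
    hg v hv, hgram, det_diagonal]
  simp [Finset.prod_pow]

end Orthogonalization

section Forms

variable {R : Type*} [NormedField R]

/-- The coefficient family of `v 0♭ ∧ v 1♭ ∧ ⋯ ∧ v (k - 1)♭`. -/
def flatWedge : {k : ℕ} → (Fin k → Fin n → R) → Form R n
  | 0, _ => Pi.single ∅ 1
  | _ + 1, v => wedge (flat (v 0)) (flatWedge (Fin.tail v))

theorem flat_single (i : Fin n) : flat (Pi.single i (1 : R)) = e1 i := by
  simp [flat, Pi.single_apply]

theorem inner'_comm (α β : Form R n) : inner' α β = inner' β α :=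
  Finset.sum_congr rfl fun _ _ => mul_comm _ _

theorem inner'_sum_smul_right {ι : Type*} (S : Finset ι) (α : Form R n) (c : ι → R)
    (β : ι → Form R n) : inner' α (∑ i ∈ S, c i • β i) = ∑ i ∈ S, c i * inner' α (β i) := by
  simp only [inner', Finset.sum_apply, Pi.smul_apply, smul_eq_mul, Finset.mul_sum, mul_left_comm]
  exact Finset.sum_comm

theorem inner'_sum_smul_left {ι : Type*} (S : Finset ι) (c : ι → R) (α : ι → Form R n)
    (β : Form R n) : inner' (∑ i ∈ S, c i • α i) β = ∑ i ∈ S, c i * inner' (α i) β := by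
  simp only [inner'_comm _ β, inner'_sum_smul_right]

theorem wedge_empty (α : Form R n) : wedge α (Pi.single ∅ 1) = α := by
  ext u
  rw [wedge, Finset.sum_eq_single_of_mem u (Finset.mem_powerset_self u)]
  · simp [signMerge]
  · intro s hs hsu
    have : u \ s ≠ ∅ := fun h =>
      hsu ((Finset.mem_powerset.1 hs).antisymm (Finset.sdiff_eq_empty_iff_subset.1 h))
    simp [Pi.single_eq_of_ne this]

theorem wedge_flat (v : Fin n → R) (β : Form R n) :
    wedge (flat v) β = ∑ i, v i • wedge (e1 i) β := by
  ext u
  simp only [wedge, flat, Finset.sum_apply, Pi.smul_apply, smul_eq_mul, Finset.mul_sum,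
    Finset.sum_mul]
  rw [Finset.sum_comm]
  refine Finset.sum_congr rfl fun i _ => Finset.sum_congr rfl fun s _ => ?_
  ring

theorem wedge_e1_apply (i : Fin n) (β : Form R n) (s : Finset (Fin n)) :
    wedge (e1 i) β s =
      if i ∈ s then (-1) ^ ((s.erase i).filter (· < i)).card * β (s.erase i) else 0 := by
  have hsign (t : Finset (Fin n)) : (signMerge {i} t : R) = (-1) ^ (t.filter (· < i)).card := by
    rw [signMerge, Finset.singleton_product, Finset.filter_map, Finset.card_map]
    rfl
  split_ifs with hi
  · rw [wedge, Finset.sum_eq_single_of_mem {i} (by simpa using hi)]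
    · simp [hsign, e1, Finset.sdiff_singleton_eq_erase]
    · intro t _ ht
      simp [e1, ht]
  · refine Finset.sum_eq_zero fun t ht => ?_
    have : t ≠ {i} := by rintro rfl; exact hi (by simpa using ht)
    simp [e1, this]

theorem inner'_wedge_e1 (i : Fin n) (α β : Form R n) :
    inner' (wedge (e1 i) α) β = inner' α (iprodB i β) := by
  simp only [inner', wedge_e1_apply, iprodB, ite_mul, zero_mul, mul_ite, mul_zero]
  rw [← Finset.sum_filter, Finset.sum_ite, Finset.sum_const_zero, zero_add]
  refine Finset.sum_nbij' (·.erase i) (insert i) ?_ ?_ ?_ ?_ ?_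
  · simp
  · simp
  · intro s hs
    exact Finset.insert_erase (by simpa using hs)
  · intro s hs
    exact Finset.erase_insert (by simpa using hs)
  · intro s hs
    rw [Finset.insert_erase (by simpa using hs)]
    ring

theorem iprodB_wedge_e1 (i j : Fin n) (β : Form R n) :
    iprodB i (wedge (e1 j) β) = (if i = j then β else 0) - wedge (e1 j) (iprodB i β) := by
  ext s
  obtain rfl | hij := eq_or_ne i j
  · by_cases hi : i ∈ s
    · simp [iprodB, wedge_e1_apply, hi, ← mul_assoc, ← mul_pow]
    · simp [iprodB, wedge_e1_apply, hi, ← mul_assoc, ← mul_pow]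
  by_cases hi : i ∈ s
  · simp [iprodB, wedge_e1_apply, hi, hij]
  by_cases hj : j ∈ s
  · have herase : (insert i s).erase j = insert i (s.erase j) := Finset.erase_insert_of_ne hij
    have hs : insert j (s.erase j) = s := Finset.insert_erase hj
    have hsign : (-1 : R) ^ (s.filter (· < i)).card *
          (-1) ^ ((insert i (s.erase j)).filter (· < j)).card =
        -((-1) ^ ((s.erase j).filter (· < j)).card *
          (-1) ^ ((s.erase j).filter (· < i)).card) := by
      rw [← hs]
      obtain h | h := hij.lt_or_gt
      · simp [Finset.filter_insert, h, h.not_gt, hi, pow_succ, mul_comm]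
      · simp [Finset.filter_insert, h, h.not_gt, pow_succ, mul_comm]
    simp [iprodB, wedge_e1_apply, hi, hj, hij, hij.symm, herase, ← mul_assoc, hsign]
  · simp [iprodB, wedge_e1_apply, hi, hij.symm, hij, hj]

theorem iprodB_sum_smul {ι : Type*} (S : Finset ι) (i : Fin n) (c : ι → R) (β : ι → Form R n) :
    iprodB i (∑ j ∈ S, c j • β j) = ∑ j ∈ S, c j • iprodB i (β j) := by
  ext s
  by_cases hi : i ∈ s
  · simp [iprodB, hi]
  · simp only [iprodB, hi, if_false, Finset.sum_apply, Pi.smul_apply, smul_eq_mul, Finset.mul_sum,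
      mul_left_comm]

theorem wedge_zero (α : Form R n) : wedge α 0 = 0 := by
  ext s
  simp [wedge]

theorem wedge_sum_smul {ι : Type*} (S : Finset ι) (α : Form R n) (c : ι → R) (β : ι → Form R n) :
    wedge α (∑ j ∈ S, c j • β j) = ∑ j ∈ S, c j • wedge α (β j) := by
  ext s
  simp only [wedge, Finset.sum_apply, Pi.smul_apply, smul_eq_mul, Finset.mul_sum]
  rw [Finset.sum_comm]
  refine Finset.sum_congr rfl fun j _ => Finset.sum_congr rfl fun t _ => ?_
  ring

theorem iprodB_wedge_flat (i : Fin n) (v : Fin n → R) (β : Form R n) :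
    iprodB i (wedge (flat v) β) = v i • β - wedge (flat v) (iprodB i β) := by
  rw [wedge_flat, wedge_flat, iprodB_sum_smul]
  simp [iprodB_wedge_e1, smul_sub]

theorem iprodB_flatWedge {k : ℕ} (i : Fin n) (v : Fin (k + 1) → Fin n → R) :
    iprodB i (flatWedge v) =
      ∑ j : Fin (k + 1), ((-1) ^ (j : ℕ) * v j i) • flatWedge (j.removeNth v) := by
  induction k with
  | zero =>
    have h : iprodB i (Pi.single ∅ 1 : Form R n) = 0 := by
      ext s
      simp [iprodB]
    simp [flatWedge, iprodB_wedge_flat, h, wedge_zero]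
  | succ k ih =>
    have hsucc (j : Fin (k + 1)) : flatWedge (j.succ.removeNth v) =
        wedge (flat (v 0)) (flatWedge (j.removeNth (Fin.tail v))) := by
      have htail : Fin.tail (j.succ.removeNth v) = j.removeNth (Fin.tail v) := by
        ext l
        simp [Fin.tail, Fin.removeNth_apply]
      rw [flatWedge, htail]
      rfl
    rw [flatWedge, iprodB_wedge_flat, ih, wedge_sum_smul, Fin.sum_univ_succ (n := k + 1),
      sub_eq_add_neg, ← Finset.sum_neg_distrib, Fin.removeNth_zero]
    simp [hsucc, Fin.tail, pow_succ]

section Sorting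

variable {α : Type*} [LinearOrder α] {s : Finset α} {k : ℕ}

theorem orderEmbOfFin_erase (h : s.card = k + 1) (j : Fin (k + 1))
    (h' : (s.erase (s.orderEmbOfFin h j)).card = k) :
    ⇑((s.erase (s.orderEmbOfFin h j)).orderEmbOfFin h') = s.orderEmbOfFin h ∘ j.succAbove := by
  refine (Finset.orderEmbOfFin_unique h' (fun i => ?_)
    ((s.orderEmbOfFin h).strictMono.comp (Fin.strictMono_succAbove j))).symm
  simp [Fin.succAbove_ne]

theorem card_filter_lt_orderEmbOfFin (h : s.card = k) (j : Fin k) :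
    (s.filter (· < s.orderEmbOfFin h j)).card = j := by
  have : s.filter (· < s.orderEmbOfFin h j) =
      (Finset.Iio j).map (s.orderEmbOfFin h).toEmbedding := by
    calc s.filter (· < s.orderEmbOfFin h j)
        = (Finset.univ.map (s.orderEmbOfFin h).toEmbedding).filter (· < s.orderEmbOfFin h j) := by
          rw [s.map_orderEmbOfFin_univ h]
      _ = (Finset.Iio j).map (s.orderEmbOfFin h).toEmbedding := by
          rw [Finset.filter_map]
          congr 1
          ext i
          simp
  rw [this, Finset.card_map, Fin.card_Iio]

theorem sum_orderEmbOfFin {M : Type*} [AddCommMonoid M] (h : s.card = k) (f : α → M) :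
    ∑ i, f (s.orderEmbOfFin h i) = ∑ a ∈ s, f a := by
  conv_rhs => rw [← s.map_orderEmbOfFin_univ h, Finset.sum_map]
  rfl

end Sorting

theorem flatWedge_apply {k : ℕ} (v : Fin k → Fin n → R) (s : Finset (Fin n)) :
    flatWedge v s = if h : s.card = k then
      Matrix.det (Matrix.of fun i j => v i (s.orderEmbOfFin h j)) else 0 := by
  induction k generalizing s with
  | zero => simp [flatWedge, Pi.single_apply]
  | succ k ih =>
    rw [flatWedge, wedge_flat]
    simp only [Finset.sum_apply, Pi.smul_apply, wedge_e1_apply, smul_eq_mul, mul_ite, mul_zero]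
    rw [← Finset.sum_filter, Finset.filter_univ_mem]
    split_ifs with h
    · rw [Matrix.det_succ_row_zero, ← sum_orderEmbOfFin h]
      refine Finset.sum_congr rfl fun j _ => ?_
      have hcard : (s.erase (s.orderEmbOfFin h j)).card = k := by
        rw [Finset.card_erase_of_mem (s.orderEmbOfFin_mem h j), h, Nat.add_sub_cancel]
      rw [Finset.filter_erase, Finset.erase_eq_of_notMem (by simp),
        card_filter_lt_orderEmbOfFin, ih, dif_pos hcard, orderEmbOfFin_erase]
      simp only [Fin.tail, Matrix.of_apply]
      rw [mul_left_comm, mul_assoc]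
      rfl
    · refine Finset.sum_eq_zero fun i hi => ?_
      rw [ih, dif_neg, mul_zero, mul_zero]
      rwa [Finset.card_erase_of_mem hi, Nat.sub_eq_iff_eq_add (Finset.card_pos.2 ⟨i, hi⟩)]

theorem evalForm_eq_inner' {k : ℕ} (α : Form R n) (v : Fin k → Fin n → R) :
    evalForm α v = inner' α (flatWedge v) := by
  simp only [evalForm, inner', flatWedge_apply, Finset.coe_orderIsoOfFin_apply]

theorem evalForm_wedge_flat {k : ℕ} (w : Fin n → R) (α : Form R n)
    (v : Fin (k + 1) → Fin n → R) :
    evalForm (wedge (flat w) α) v =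
      ∑ j : Fin (k + 1), (-1) ^ (j : ℕ) * (w ⬝ᵥ v j) * evalForm α (j.removeNth v) := by
  simp only [evalForm_eq_inner', wedge_flat, inner'_sum_smul_left, inner'_wedge_e1,
    iprodB_flatWedge, inner'_sum_smul_right, dotProduct, Finset.mul_sum, Finset.sum_mul]
  rw [Finset.sum_comm]
  refine Finset.sum_congr rfl fun j _ => Finset.sum_congr rfl fun i _ => ?_
  ring

theorem evalForm_wedge_e1_quadruple (i : Fin n) (α : Form R n) (x y z w : Fin n → R) :
    evalForm (wedge (e1 i) α) ![x, y, z, w] =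
      x i * evalForm α ![y, z, w] - y i * evalForm α ![x, z, w] + z i * evalForm α ![x, y, w]
        - w i * evalForm α ![x, y, z] := by
  have hremove0 : Fin.removeNth 0 ![x, y, z, w] = ![y, z, w] := rfl
  have hremove1 : Fin.removeNth 1 ![x, y, z, w] = ![x, z, w] := by ext j; fin_cases j <;> rfl
  have hremove2 : Fin.removeNth 2 ![x, y, z, w] = ![x, y, w] := by ext j; fin_cases j <;> rfl
  have hremove3 : Fin.removeNth 3 ![x, y, z, w] = ![x, y, z] := by ext j; fin_cases j <;> rfl
  rw [← flat_single, evalForm_wedge_flat]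
  simp only [Nat.reduceAdd, single_dotProduct, one_mul, Fin.sum_univ_four, Fin.isValue,
    Fin.coe_ofNat_eq_mod, Nat.reduceMod, pow_succ, pow_zero, Matrix.cons_val, hremove0, hremove1,
    hremove2, hremove3]
  ring

theorem evalForm_iprodB {k : ℕ} (i : Fin n) (α : Form R n) (v : Fin k → Fin n → R) :
    evalForm (iprodB i α) v = evalForm α (Matrix.vecCons (Pi.single i 1) v) := by
  rw [evalForm_eq_inner', evalForm_eq_inner', flatWedge, Matrix.vecCons, Fin.cons_zero,
    Fin.tail_cons, flat_single, inner'_comm, ← inner'_wedge_e1, inner'_comm]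

theorem evalForm_flatWedge {k : ℕ} (u v : Fin k → Fin n → R) :
    evalForm (flatWedge u) v = (Matrix.of fun i j => u i ⬝ᵥ v j).det := by
  induction k with
  | zero => simp [evalForm_eq_inner', flatWedge, inner', Pi.single_apply]
  | succ k ih =>
    rw [Matrix.det_succ_row_zero, flatWedge, evalForm_wedge_flat]
    refine Finset.sum_congr rfl fun j _ => ?_
    rw [ih]
    rfl

theorem fnorm_sq (α : Form ℝ n) : fnorm α ^ 2 = inner' α α := by
  rw [fnorm, Real.sq_sqrt (by positivity), inner']
  simp only [Real.norm_eq_abs, sq_abs, ← sq]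

theorem fnorm_flatWedge_sq {k : ℕ} (u : Fin k → Fin n → ℝ) :
    fnorm (flatWedge u) ^ 2 = (Matrix.of fun i j => u i ⬝ᵥ u j).det := by
  rw [fnorm_sq, ← evalForm_eq_inner', evalForm_flatWedge]

/-- Evaluation of the degree `k` part of a form, as an alternating map. -/
def evalAlternating (k : ℕ) (α : Form R n) : (Fin n → R) [⋀^Fin k]→ₗ[R] R :=
  ∑ s, α s • if h : s.card = k then
    Matrix.detRowAlternating.compLinearMap (LinearMap.funLeft R R (s.orderEmbOfFin h)) else 0

theorem evalAlternating_apply {k : ℕ} (α : Form R n) (v : Fin k → Fin n → R) :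
    evalAlternating k α v = evalForm α v := by
  change AlternatingMap.toMultilinearMapLM (S := R) (∑ s, _) v = _
  rw [map_sum, sum_apply]
  simp only [evalForm, Finset.coe_orderIsoOfFin_apply]
  refine Finset.sum_congr rfl fun s _ => ?_
  split_ifs <;> rfl

theorem evalForm_add {k : ℕ} (α β : Form R n) (v : Fin k → Fin n → R) :
    evalForm (α + β) v = evalForm α v + evalForm β v := by
  simp only [evalForm, Pi.add_apply, add_mul, Finset.sum_add_distrib]

theorem evalForm_sub {k : ℕ} (α β : Form R n) (v : Fin k → Fin n → R) :
    evalForm (α - β) v = evalForm α v - evalForm β v := by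
  simp only [evalForm, Pi.sub_apply, sub_mul, Finset.sum_sub_distrib]

theorem evalForm_smul {k : ℕ} (c : R) (α : Form R n) (v : Fin k → Fin n → R) :
    evalForm (c • α) v = c * evalForm α v := by
  simp only [evalForm, Pi.smul_apply, smul_eq_mul, mul_assoc, Finset.mul_sum]

/-- The determinant of the components of the vectors `v` at the indices `f`, i.e. the value of
`e^{f 0} ∧ ⋯ ∧ e^{f (k - 1)}` on `v`. -/
def minor {k : ℕ} (v : Fin k → Fin n → R) (f : Fin k → Fin n) : R :=
  (Matrix.of fun i j => v i (f j)).det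

theorem evalForm_single_image {k : ℕ} {f : Fin k → Fin n} (hf : StrictMono f)
    (v : Fin k → Fin n → R) :
    evalForm (Pi.single (Finset.univ.image f) 1) v = minor v f := by
  have hcard : (Finset.univ.image f).card = k := by
    rw [Finset.card_image_of_injective _ hf.injective, Finset.card_univ, Fintype.card_fin]
  have hsort : f = (Finset.univ.image f).orderEmbOfFin hcard :=
    Finset.orderEmbOfFin_unique hcard (fun i => Finset.mem_image_of_mem f (Finset.mem_univ i)) hf
  rw [evalForm, Finset.sum_eq_single_of_mem _ (Finset.mem_univ (Finset.univ.image f)),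
    Pi.single_eq_same, one_mul, dif_pos hcard]
  · simp only [minor, Finset.coe_orderIsoOfFin_apply, ← hsort]
  · intro s _ hs
    rw [Pi.single_eq_of_ne hs, zero_mul]

theorem evalForm_single_triple {a b c : Fin n} (hab : a < b) (hbc : b < c)
    (v : Fin 3 → Fin n → R) : evalForm (Pi.single {a, b, c} 1) v = minor v ![a, b, c] := by
  have himage : ({a, b, c} : Finset (Fin n)) = Finset.univ.image ![a, b, c] := by
    ext
    simp [Fin.exists_fin_succ, eq_comm]
  rw [himage, evalForm_single_image]
  simp [hab, hbc]

theorem evalForm_single_quadruple {a b c d : Fin n} (hab : a < b) (hbc : b < c) (hcd : c < d)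
    (v : Fin 4 → Fin n → R) : evalForm (Pi.single {a, b, c, d} 1) v = minor v ![a, b, c, d] := by
  have himage : ({a, b, c, d} : Finset (Fin n)) = Finset.univ.image ![a, b, c, d] := by
    ext
    simp [Fin.exists_fin_succ, eq_comm]
  rw [himage, evalForm_single_image]
  simp [hab, hbc, hcd]

theorem iprod_sharp1_e1 (i : Fin n) (α : Form R n) : iprod (sharp1 (e1 i)) α = iprodB i α := by
  ext s
  simp [iprod, sharp1, e1]

end Forms

section Cayley

variable {R : Type*} [NormedField R]

theorem phi8_eq : (phi8 : Form R 8) =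
    Pi.single {1, 2, 3} 1 + Pi.single {1, 4, 5} 1 + Pi.single {1, 6, 7} 1 + Pi.single {2, 4, 6} 1
      - Pi.single {2, 5, 7} 1 - Pi.single {3, 4, 7} 1 - Pi.single {3, 5, 6} 1 := by
  ext s
  unfold phi8
  split_ifs
  all_goals subst_vars
  all_goals simp +decide [*]

theorem psi8_eq : (psi8 : Form R 8) =
    Pi.single {4, 5, 6, 7} 1 + Pi.single {2, 3, 6, 7} 1 + Pi.single {2, 3, 4, 5} 1
      + Pi.single {1, 3, 5, 7} 1 - Pi.single {1, 3, 4, 6} 1 - Pi.single {1, 2, 5, 6} 1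
      - Pi.single {1, 2, 4, 7} 1 := by
  ext s
  unfold psi8
  split_ifs
  all_goals subst_vars
  all_goals simp +decide [*]

theorem evalForm_phi8 (v : Fin 3 → Fin 8 → R) : evalForm phi8 v =
    minor v ![1, 2, 3] + minor v ![1, 4, 5] + minor v ![1, 6, 7] + minor v ![2, 4, 6]
      - minor v ![2, 5, 7] - minor v ![3, 4, 7] - minor v ![3, 5, 6] := by
  simp (disch := decide) only [phi8_eq, evalForm_add, evalForm_sub, evalForm_single_triple]

theorem evalForm_psi8 (v : Fin 4 → Fin 8 → R) : evalForm psi8 v =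
    minor v ![4, 5, 6, 7] + minor v ![2, 3, 6, 7] + minor v ![2, 3, 4, 5] + minor v ![1, 3, 5, 7]
      - minor v ![1, 3, 4, 6] - minor v ![1, 2, 5, 6] - minor v ![1, 2, 4, 7] := by
  simp (disch := decide) only [psi8_eq, evalForm_add, evalForm_sub, evalForm_single_quadruple]

/-- The octonion product on `R⁸`: `e₀` is the unit and the product of imaginary vectors is
`x * y = -⟨x, y⟩ e₀ + x × y`, the cross product being defined by `⟨x × y, z⟩ = φ(x, y, z)`. -/
def octMul (x y : Fin 8 → R) : Fin 8 → R :=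
  x 0 • y + y 0 • x - (x ⬝ᵥ y) • Pi.single 0 1 +
    fun i => evalForm phi8 ![x, y, Pi.single i 1]

/-- The conjugate of an octonion. -/
def octConj (x : Fin 8 → R) : Fin 8 → R := (2 * x 0) • Pi.single 0 1 - x

theorem minor_triple (x y z : Fin n → R) (a b c : Fin n) :
    minor ![x, y, z] ![a, b, c] =
      x a * y b * z c - x a * y c * z b - x b * y a * z c + x b * y c * z a + x c * y a * z b
        - x c * y b * z a := by
  simp [minor, Matrix.det_fin_three]

theorem minor_quadruple (x y z w : Fin n → R) (a b c d : Fin n) :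
    minor ![x, y, z, w] ![a, b, c, d] =
      x a * minor ![y, z, w] ![b, c, d] - x b * minor ![y, z, w] ![a, c, d]
        + x c * minor ![y, z, w] ![a, b, d] - x d * minor ![y, z, w] ![a, b, c] := by
  simp only [minor, Matrix.det_succ_row_zero (n := 3), Matrix.det_fin_three, Matrix.of_apply,
    Matrix.submatrix_apply, Fin.sum_univ_four, Fin.succAbove, Fin.reduceSucc, Fin.reduceCastSucc,
    Fin.reduceLT, reduceIte, Fin.coe_ofNat_eq_mod, Matrix.cons_val]
  ring

theorem octMul_apply (x y : Fin 8 → R) (i : Fin 8) : octMul x y i =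
    ![x 0 * y 0 - x 1 * y 1 - x 2 * y 2 - x 3 * y 3 - x 4 * y 4 - x 5 * y 5 - x 6 * y 6 -
        x 7 * y 7,
      x 0 * y 1 + x 1 * y 0 + x 2 * y 3 - x 3 * y 2 + x 4 * y 5 - x 5 * y 4 + x 6 * y 7 - x 7 * y 6,
      x 0 * y 2 + x 2 * y 0 - x 1 * y 3 + x 3 * y 1 + x 4 * y 6 - x 6 * y 4 - x 5 * y 7 + x 7 * y 5,
      x 0 * y 3 + x 3 * y 0 + x 1 * y 2 - x 2 * y 1 - x 4 * y 7 + x 7 * y 4 - x 5 * y 6 + x 6 * y 5,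
      x 0 * y 4 + x 4 * y 0 - x 1 * y 5 + x 5 * y 1 - x 2 * y 6 + x 6 * y 2 + x 3 * y 7 - x 7 * y 3,
      x 0 * y 5 + x 5 * y 0 + x 1 * y 4 - x 4 * y 1 + x 2 * y 7 - x 7 * y 2 + x 3 * y 6 - x 6 * y 3,
      x 0 * y 6 + x 6 * y 0 - x 1 * y 7 + x 7 * y 1 + x 2 * y 4 - x 4 * y 2 - x 3 * y 5 + x 5 * y 3,
      x 0 * y 7 + x 7 * y 0 + x 1 * y 6 - x 6 * y 1 - x 2 * y 5 + x 5 * y 2 - x 3 * y 4 +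
        x 4 * y 3] i := by
  fin_cases i
  all_goals
    simp only [Fin.zero_eta, Fin.mk_one, Fin.reduceFinMk, Fin.reduceEq, reduceIte, octMul,
      evalForm_phi8, minor_triple, Pi.single_apply, Pi.add_apply, Pi.sub_apply, Pi.smul_apply,
      smul_eq_mul, dotProduct, Fin.sum_univ_eight, Matrix.cons_val]
    ring

theorem octConj_eq (x : Fin 8 → R) :
    octConj x = ![x 0, -x 1, -x 2, -x 3, -x 4, -x 5, -x 6, -x 7] := by
  ext i
  fin_cases i <;> simp [octConj]
  ring

theorem dotProduct_octMul_self (x y : Fin 8 → R) :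
    octMul x y ⬝ᵥ octMul x y = (x ⬝ᵥ x) * (y ⬝ᵥ y) := by
  simp only [dotProduct, Fin.sum_univ_eight, octMul_apply, Matrix.cons_val]
  ring

theorem dotProduct_octConj_self (x : Fin 8 → R) : octConj x ⬝ᵥ octConj x = x ⬝ᵥ x := by
  simp only [dotProduct, Fin.sum_univ_eight, octConj_eq, Matrix.cons_val, neg_mul_neg]

/-- The Cayley form `Φ` (index `0`) together with the forms `√8 λ⁴(e^μ)` (indices `μ = 1, …, 7`):
the components of the fourfold cross product on the octonions. -/
def cayleyForm (i : Fin 8) : Form R 8 :=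
  if i = 0 then Phi8 else wedge (e1 0) (iprodB i psi8) - wedge (e1 i) phi8

/-- The fourfold cross product on the octonions (Harvey–Lawson): the alternation of
`-((x ȳ) z) w̄`, expanded so that all corrections carry inner products of the arguments. -/
def octCross (x y z w : Fin 8 → R) : Fin 8 → R :=
  - octMul (octMul (octMul x (octConj y)) z) (octConj w)
    + (x ⬝ᵥ y) • octMul z (octConj w) - (x ⬝ᵥ z) • octMul y (octConj w)
    + (x ⬝ᵥ w) • octMul y (octConj z) + (y ⬝ᵥ z) • octMul x (octConj w)
    - (y ⬝ᵥ w) • octMul x (octConj z) + (z ⬝ᵥ w) • octMul x (octConj y)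
    - ((x ⬝ᵥ y) * (z ⬝ᵥ w) - (x ⬝ᵥ z) * (y ⬝ᵥ w) + (x ⬝ᵥ w) * (y ⬝ᵥ z)) • Pi.single 0 1

set_option maxHeartbeats 1000000 in
-- Each coordinate is a degree-four polynomial identity in 32 variables with hundreds of monomials.
set_option maxRecDepth 2000 in
theorem evalForm_cayleyForm (x y z w : Fin 8 → R) (i : Fin 8) :
    evalForm (cayleyForm i) ![x, y, z, w] = octCross x y z w i := by
  fin_cases i
  all_goals
    simp only [Fin.zero_eta, Fin.mk_one, Fin.reduceFinMk, Fin.reduceEq, reduceIte, cayleyForm, Phi8,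
      evalForm_add, evalForm_sub, evalForm_iprodB, evalForm_wedge_e1_quadruple, evalForm_phi8,
      evalForm_psi8, minor_quadruple, minor_triple, Pi.single_apply, octCross, Pi.add_apply,
      Pi.sub_apply, Pi.neg_apply, Pi.smul_apply, smul_eq_mul, octMul_apply, octConj_eq, dotProduct,
      Fin.sum_univ_eight, ↓Matrix.cons_val]
    ring

theorem octCross_of_orthogonal {x y z w : Fin 8 → R} (hxy : x ⬝ᵥ y = 0) (hxz : x ⬝ᵥ z = 0)
    (hxw : x ⬝ᵥ w = 0) (hyz : y ⬝ᵥ z = 0) (hyw : y ⬝ᵥ w = 0) (hzw : z ⬝ᵥ w = 0) :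
    octCross x y z w = - octMul (octMul (octMul x (octConj y)) z) (octConj w) := by
  simp [octCross, hxy, hxz, hxw, hyz, hyw, hzw]

theorem sum_sq_evalForm_cayleyForm_of_orthogonal {v : Fin 4 → Fin 8 → R}
    (hv : Pairwise fun i j => v i ⬝ᵥ v j = 0) :
    ∑ i, evalForm (cayleyForm i) v ^ 2 = ∏ j, v j ⬝ᵥ v j := by
  have hcross (i : Fin 8) : evalForm (cayleyForm i) v = octCross (v 0) (v 1) (v 2) (v 3) i := by
    rw [← evalForm_cayleyForm]
    exact congrArg _ (FinVec.etaExpand_eq v).symm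
  calc ∑ i, evalForm (cayleyForm i) v ^ 2
      = octCross (v 0) (v 1) (v 2) (v 3) ⬝ᵥ octCross (v 0) (v 1) (v 2) (v 3) := by
        simp only [hcross, dotProduct, sq]
    _ = (v 0 ⬝ᵥ v 0) * (v 1 ⬝ᵥ v 1) * (v 2 ⬝ᵥ v 2) * (v 3 ⬝ᵥ v 3) := by
        rw [octCross_of_orthogonal (hv (by decide)) (hv (by decide)) (hv (by decide))
          (hv (by decide)) (hv (by decide)) (hv (by decide)), neg_dotProduct_neg]
        simp only [dotProduct_octMul_self, dotProduct_octConj_self]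
    _ = ∏ j, v j ⬝ᵥ v j := by rw [Fin.prod_univ_four]

theorem lambda4_e1_succ (μ : Fin 7) :
    (lambda4 (e1 μ.succ) : Form K 8) = (algebraMap ℝ K √8)⁻¹ • cayleyForm μ.succ := by
  rw [lambda4, iprod_sharp1_e1, cayleyForm, if_neg μ.succ_ne_zero]

theorem evalForm_lambda4_e1_succ_sq (μ : Fin 7) (u : Fin 4 → Fin 8 → ℝ) :
    8 * evalForm (lambda4 (e1 μ.succ)) u ^ 2 = evalForm (cayleyForm μ.succ) u ^ 2 := by
  have h8 : (8 : ℝ) * (√8)⁻¹ ^ 2 = 1 := by norm_num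
  rw [lambda4_e1_succ, evalForm_smul, Algebra.algebraMap_self_apply, mul_pow, ← mul_assoc, h8,
    one_mul]

/-- The fourfold cross product on the octonions as an alternating map of Euclidean spaces. -/
def octCrossAlternating :
    EuclideanSpace ℝ (Fin 8) [⋀^Fin 4]→ₗ[ℝ] EuclideanSpace ℝ (Fin 8) :=
  ((WithLp.linearEquiv 2 ℝ (Fin 8 → ℝ)).symm.toLinearMap.compAlternatingMap
    (AlternatingMap.pi fun i => evalAlternating 4 (cayleyForm i))).compLinearMap
      (WithLp.linearEquiv 2 ℝ (Fin 8 → ℝ)).toLinearMap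

theorem octCrossAlternating_apply (v : Fin 4 → EuclideanSpace ℝ (Fin 8)) (i : Fin 8) :
    octCrossAlternating v i = evalForm (cayleyForm i) fun j => (v j).ofLp := by
  simp only [octCrossAlternating, AlternatingMap.compLinearMap_apply, LinearEquiv.coe_coe,
    LinearMap.compAlternatingMap_apply]
  change evalAlternating 4 (cayleyForm i) _ = _
  rw [evalAlternating_apply]
  rfl

theorem norm_sq_octCrossAlternating (v : Fin 4 → EuclideanSpace ℝ (Fin 8)) :
    ‖octCrossAlternating v‖ ^ 2 = ∑ i, evalForm (cayleyForm i) (fun j => (v j).ofLp) ^ 2 := by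
  simp only [EuclideanSpace.norm_sq_eq, octCrossAlternating_apply, Real.norm_eq_abs, sq_abs]

theorem sum_sq_evalForm_cayleyForm (u : Fin 4 → Fin 8 → ℝ) :
    ∑ i, evalForm (cayleyForm i) u ^ 2 = (Matrix.of fun i j => u i ⬝ᵥ u j).det := by
  have hinner (x y : EuclideanSpace ℝ (Fin 8)) : inner ℝ x y = x.ofLp ⬝ᵥ y.ofLp := by
    rw [EuclideanSpace.inner_eq_star_dotProduct, star_trivial, dotProduct_comm]
  have horthogonal (v : Fin 4 → EuclideanSpace ℝ (Fin 8))
      (hv : Pairwise fun i j => inner ℝ (v i) (v j) = 0) :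
      ‖octCrossAlternating v‖ = ∏ j, ‖v j‖ := by
    rw [← sq_eq_sq₀ (norm_nonneg _) (by positivity), ← Finset.prod_pow]
    simp only [hinner] at hv
    rw [norm_sq_octCrossAlternating]
    simp only [← real_inner_self_eq_norm_sq, hinner]
    exact sum_sq_evalForm_cayleyForm_of_orthogonal hv
  have hgram := norm_sq_eq_det_gram octCrossAlternating horthogonal fun j => WithLp.toLp 2 (u j)
  simpa only [norm_sq_octCrossAlternating, Matrix.gram, hinner, RCLike.ofReal_real_eq_id,
    id_eq] using hgram

end Cayley

/-- Lemma 3.5, the Cayley equality.  For all `u₀,u₁,u₂,u₃ ∈ ℝ⁸`: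
`|Φ(u₀,u₁,u₂,u₃)|² + 8 |τ(u₀,u₁,u₂,u₃)|² = |u₀♭ ∧ u₁♭ ∧ u₂♭ ∧ u₃♭|²`. -/
theorem statement5 (u : Fin 4 → (Fin 8 → ℝ)) :
    (evalForm Phi8 u) ^ 2 +
      8 * ∑ μ : Fin 7, (evalForm (lambda4 (e1 μ.succ)) u) ^ 2 =
    (fnorm (wedge (flat (u 0)) (wedge (flat (u 1)) (wedge (flat (u 2)) (flat (u 3)))))) ^ 2 := by
  have hwedge : wedge (flat (u 0)) (wedge (flat (u 1)) (wedge (flat (u 2)) (flat (u 3)))) =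
      flatWedge u := by
    conv_lhs => rw [← wedge_empty (flat (u 3))]
    rfl
  calc evalForm Phi8 u ^ 2 + 8 * ∑ μ : Fin 7, evalForm (lambda4 (e1 μ.succ)) u ^ 2
      = evalForm (cayleyForm 0) u ^ 2 + ∑ μ : Fin 7, evalForm (cayleyForm μ.succ) u ^ 2 := by
        simp only [Finset.mul_sum, evalForm_lambda4_e1_succ_sq, cayleyForm, if_true]
    _ = ∑ i, evalForm (cayleyForm i) u ^ 2 := by
        rw [Fin.sum_univ_succ (n := 7)]
    _ = (Matrix.of fun i j => u i ⬝ᵥ u j).det := sum_sq_evalForm_cayleyForm u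
    _ = fnorm (flatWedge u) ^ 2 := (fnorm_flatWedge_sq u).symm
    _ = _ := by rw [hwedge]

end FMpaper
end
end

section
/- Let B ⊂ ℝ³ be open and f = (f⁴,…,f⁷): B → ℝ⁴ smooth, with Fourier–Mukai curvature F_∇^S as in the context. Then at every point of B: ( 1 + ½⟨(F_∇^S)², *₇φ⟩ )² + ‖ *₇φ ∧ F_∇^S + (1/6)(F_∇^S)³ ‖² + ¼‖ φ ∧ *₇((F_∇^S)²) ‖² = det( id_{ℝ⁷} + (−√−1·F_∇^S)^♯ ). -/
open scoped BigOperators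

noncomputable section

namespace FMpaper

variable {K : Type*} [NormedField K] [NormedAlgebra ℝ K]

variable {n : ℕ}

/-! Graph setting for coassociative `T⁴`-fibrations: `ℝ⁷ = ℝ³ × ℝ⁴` with coordinates
`(x¹,x²,x³,y⁴,…,y⁷)`. -/

/-- The index of the coordinate `x^j` (`j = 1,2,3` shifted to `0,1,2`) in `ℝ⁷`. -/
def xj (j : Fin 3) : Fin 7 := Fin.castAdd 4 j

/-- The index of the coordinate `y^a` (`a = 4,…,7` shifted to `0,…,3`) in `ℝ⁷`. -/
def ya (a : Fin 4) : Fin 7 := a.addNat 3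

/-- The spanning tangent vectors `v_j = ∂_j + Σ_a (∂f^a/∂x^j) ∂_a` of the graph of `f`. -/
def vA (f : (Fin 3 → ℝ) → (Fin 4 → ℝ)) (x : Fin 3 → ℝ) (j : Fin 3) : Fin 7 → ℝ :=
  Pi.single (xj j) 1 + ∑ a : Fin 4, pd f x j a • (Pi.single (ya a) 1 : Fin 7 → ℝ)

/-- The real 2-form `γ` with `F_∇^S = √-1 γ`, i.e. `γ = Σ_{j,a} (∂f^a/∂x^j) dx^j ∧ dy^a`. -/
def gammaA (f : (Fin 3 → ℝ) → (Fin 4 → ℝ)) (x : Fin 3 → ℝ) : Form ℝ 7 :=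
  ∑ j : Fin 3, ∑ a : Fin 4, pd f x j a • wedge (e1 (xj j)) (e1 (ya a))

/-- The `√-1 ℝ`-valued curvature 2-form
`F_∇^S = √-1 Σ_{j,a} (∂f^a/∂x^j) dx^j ∧ dy^a` of the real Fourier–Mukai transform. -/
def FSA (f : (Fin 3 → ℝ) → (Fin 4 → ℝ)) (x : Fin 3 → ℝ) : Form ℂ 7 :=
  fun s => Complex.I * (gammaA f x s : ℂ)

/-!
Write `F = √-1 γ`. Expanding in principal minors, `det (1 + γ♯)` is the sum over all index sets of
the minors of a skew matrix; the odd ones vanish, and the even ones are squares of Pfaffians, which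
are the coefficients of `γ`, `γ² / 2` and `γ³ / 6`. Hence
`det (1 + γ♯) = 1 + |γ|² + |γ²|² / 4 + |γ³|² / 36`.
The left-hand side is compared with this degree by degree in `γ`, using `|ψ ∧ γ|² = |γ|² + ⟨γ², ψ⟩`
in degree two and `3 |φ ∧ *γ²|² = 3 |γ²|² - 3 ⟨γ², ψ⟩² + 4 ⟨ψ ∧ γ, γ³⟩` in degree four, where
`ψ = *φ`.
-/

section

open Finset

lemma powersetCard_add_two_singleton {ι : Type*} (a : ι) (k : ℕ) :
    powersetCard (k + 2) {a} = ∅ :=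
  powersetCard_eq_empty.2 (by rw [card_singleton]; omega)

lemma sum_powersetCard_one {ι M : Type*} [AddCommMonoid M] (s : Finset ι) (F : Finset ι → M) :
    ∑ t ∈ powersetCard 1 s, F t = ∑ a ∈ s, F {a} := by
  simp only [powersetCard_one, sum_map, Function.Embedding.coeFn_mk]

lemma sum_powersetCard_succ_insert {ι M : Type*} [DecidableEq ι] [AddCommMonoid M] {a : ι}
    {s : Finset ι} (ha : a ∉ s) (k : ℕ) (F : Finset ι → M) :
    ∑ t ∈ powersetCard (k + 1) (insert a s), F t =
      ∑ t ∈ powersetCard k s, F (insert a t) + ∑ t ∈ powersetCard (k + 1) s, F t := by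
  rw [powersetCard_succ_insert ha, add_comm, sum_union, sum_image]
  · exact insert_erase_invOn.2.injOn.mono fun t ht => notMem_mono (mem_powersetCard.1 ht).1 ha
  · rw [disjoint_right]
    simp only [mem_image, mem_powersetCard]
    rintro _ ⟨t, -, rfl⟩ ht
    exact ha (ht.1 (mem_insert_self a t))

lemma det_one_add_eq_sum_principal_minors {ι R : Type*} [Fintype ι] [DecidableEq ι]
    [CommRing R] (M : Matrix ι ι R) :
    (1 + M).det = ∑ s : Finset ι, (M.submatrix ((↑) : s → ι) (↑)).det := by
  simp only [← Matrix.det_piecewise_one_eq_submatrix_det, add_comm 1 M]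
  exact Matrix.detRowAlternating.toMultilinearMap.map_add_univ M.row (1 : Matrix ι ι R).row

end

section Forms

open Finset

variable {𝕜 : Type*} [NormedField 𝕜] {m k l : ℕ}

lemma wedge_smul_left (c : 𝕜) (α β : Form 𝕜 n) : wedge (c • α) β = c • wedge α β := by
  ext u
  simp only [wedge, Pi.smul_apply, smul_eq_mul, mul_sum]
  exact sum_congr rfl fun s _ => by ring

lemma wedge_smul_right (c : 𝕜) (α β : Form 𝕜 n) : wedge α (c • β) = c • wedge α β := by
  ext u
  simp only [wedge, Pi.smul_apply, smul_eq_mul, mul_sum]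
  exact sum_congr rfl fun s _ => by ring

lemma wedge_add_left (α α' β : Form 𝕜 n) : wedge (α + α') β = wedge α β + wedge α' β := by
  ext u
  simp only [wedge, Pi.add_apply, mul_add, add_mul, sum_add_distrib]

lemma wedge_sub_left (α α' β : Form 𝕜 n) : wedge (α - α') β = wedge α β - wedge α' β := by
  ext u
  simp only [wedge, Pi.sub_apply, mul_sub, sub_mul, sum_sub_distrib]

lemma wedge_single_apply (s : Finset (Fin n)) (c : 𝕜) (β : Form 𝕜 n) (u : Finset (Fin n)) :
    wedge (Pi.single s c) β u = if s ⊆ u then signMerge s (u \ s) * c * β (u \ s) else 0 := by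
  simp only [wedge, Pi.single_apply, mul_ite, ite_mul, mul_zero, zero_mul, sum_ite_eq',
    mem_powerset]

lemma hstar_smul (c : 𝕜) (α : Form 𝕜 n) : hstar (c • α) = c • hstar α := by
  ext u
  simp only [hstar, Pi.smul_apply, smul_eq_mul, mul_left_comm]

lemma inner'_sub_smul_self (c : 𝕜) (α β : Form 𝕜 n) :
    inner' (α - c • β) (α - c • β) = inner' α α - 2 * c * inner' α β + c ^ 2 * inner' β β := by
  simp only [inner', mul_sum, ← sum_sub_distrib, ← sum_add_distrib]
  exact sum_congr rfl fun s _ => by simp only [Pi.sub_apply, Pi.smul_apply, smul_eq_mul]; ring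

lemma signMerge_eq_ite (s t : Finset (Fin n)) :
    (signMerge s t : 𝕜) = if Even #{p ∈ s ×ˢ t | p.2 < p.1} then 1 else -1 := by
  rw [signMerge, neg_one_pow_eq_ite]

lemma isGrade.smul {α : Form 𝕜 n} (hα : isGrade k α) (c : 𝕜) : isGrade k (c • α) :=
  fun s hs => by rw [Pi.smul_apply, hα s hs, smul_zero]

lemma isGrade.sum {ι : Type*} {t : Finset ι} {α : ι → Form 𝕜 n}
    (hα : ∀ i ∈ t, isGrade k (α i)) : isGrade k (∑ i ∈ t, α i) :=
  fun s hs => by rw [Finset.sum_apply, sum_eq_zero fun i hi => hα i hi s hs]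

lemma isGrade_e1 (i : Fin n) : isGrade 1 (e1 i : Form 𝕜 n) :=
  fun s hs => if_neg fun h => hs (by rw [h, card_singleton])

lemma isGrade.wedge {α β : Form 𝕜 n} (hα : isGrade k α) (hβ : isGrade l β) :
    isGrade (k + l) (wedge α β) := by
  refine fun u hu => sum_eq_zero fun s hs => ?_
  have hcard : #(u \ s) + #s = #u := card_sdiff_add_card_eq_card (mem_powerset.1 hs)
  obtain hs | hs : #s ≠ k ∨ #(u \ s) ≠ l := by omega
  · rw [hα s hs, mul_zero, zero_mul]
  · rw [hβ _ hs, mul_zero]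

lemma isGrade.comp_compl {α : Form 𝕜 n} (hα : isGrade k α) (hkl : k + l = n) :
    isGrade l fun s => α sᶜ := by
  intro t ht
  have hcard : #t + #tᶜ = n := by rw [card_add_card_compl, Fintype.card_fin]
  exact hα _ (by omega)

lemma isGrade.hstar {α : Form 𝕜 n} (hα : isGrade k α) (hkl : k + l = n) :
    isGrade l (hstar α) :=
  fun t ht => mul_eq_zero_of_right _ (hα.comp_compl hkl t ht)

lemma isGrade.sum_powerset_mul {α : Form 𝕜 n} (hα : isGrade k α) (β : Form 𝕜 n)
    (u : Finset (Fin n)) :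
    ∑ s ∈ u.powerset, α s * β s = ∑ s ∈ u.powersetCard k, α s * β s := by
  rw [powersetCard_eq_filter, sum_filter_of_ne]
  exact fun s _ hs => not_imp_comm.1 (hα s) (left_ne_zero_of_mul hs)

lemma isGrade.wedge_apply {α : Form 𝕜 n} (hα : isGrade k α) (β : Form 𝕜 n)
    (u : Finset (Fin n)) :
    FMpaper.wedge α β u = ∑ s ∈ u.powersetCard k, signMerge s (u \ s) * α s * β (u \ s) := by
  simp only [FMpaper.wedge, mul_comm (signMerge _ _), mul_assoc]
  exact hα.sum_powerset_mul _ _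

lemma isGrade.inner'_eq_sum_powersetCard {α : Form 𝕜 n} (hα : isGrade k α) (β : Form 𝕜 n) :
    inner' α β = ∑ s ∈ univ.powersetCard k, α s * β s := by
  rw [inner', ← powerset_univ, hα.sum_powerset_mul]

lemma isGrade.inner'_eq_sum_compl_singleton {α : Form 𝕜 (n + 1)} (hα : isGrade n α)
    (β : Form 𝕜 (n + 1)) : inner' α β = ∑ i, α {i}ᶜ * β {i}ᶜ := by
  calc inner' α β = ∑ s, α sᶜ * β sᶜ :=
        (compl_involutive.bijective.sum_comp fun s => α s * β s).symm
    _ = ∑ i, α {i}ᶜ * β {i}ᶜ := by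
        rw [← powerset_univ, (hα.comp_compl rfl).sum_powerset_mul fun s => β sᶜ,
          sum_powersetCard_one]

lemma isGrade_gammaA (f : (Fin 3 → ℝ) → (Fin 4 → ℝ)) (x : Fin 3 → ℝ) :
    isGrade 2 (gammaA f x) :=
  isGrade.sum fun _ _ => isGrade.sum fun _ _ => ((isGrade_e1 _).wedge (isGrade_e1 _)).smul _

/-- The pullback of a form along the inclusion of the coordinate subspace spanned by the basis
vectors `e_{f 0}, …, e_{f (m-1)}`; monotonicity of `f` makes it free of signs. -/
def restrict {R : Type*} (f : Fin m ↪o Fin n) (α : Form R n) : Form R m :=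
  fun s => α (s.map f.toEmbedding)

lemma restrict_pair {R : Type*} (f : Fin m ↪o Fin n) (α : Form R n) (i j : Fin m) :
    restrict f α {i, j} = α {f i, f j} := by
  rw [restrict, map_insert, map_singleton]
  rfl

lemma restrict_orderEmbOfFin_univ {R : Type*} (α : Form R n) {s : Finset (Fin n)}
    (hs : #s = k) : restrict (s.orderEmbOfFin hs) α univ = α s := by
  rw [restrict, map_orderEmbOfFin_univ]

lemma restrict_succAboveOrderEmb_univ {R : Type*} (α : Form R (n + 1)) (i : Fin (n + 1)) :
    restrict i.succAboveOrderEmb α univ = α {i}ᶜ := by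
  rw [restrict, map_eq_image, ← Fin.image_succAbove_univ]
  rfl

lemma isGrade.restrict {α : Form 𝕜 n} (hα : isGrade k α) (f : Fin m ↪o Fin n) :
    isGrade k (restrict f α) :=
  fun s hs => hα _ (by rwa [card_map])

lemma signMerge_map (f : Fin m ↪o Fin n) (s t : Finset (Fin m)) :
    (signMerge (s.map f.toEmbedding) (t.map f.toEmbedding) : 𝕜) = signMerge s t := by
  rw [signMerge, signMerge, ← prodMap_map_product, filter_map, card_map]
  congr! 4
  exact f.lt_iff_lt

lemma restrict_wedge (f : Fin m ↪o Fin n) (α β : Form 𝕜 n) :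
    restrict f (wedge α β) = wedge (restrict f α) (restrict f β) := by
  ext u
  have hpow : (u.map f.toEmbedding).powerset =
      u.powerset.map (mapEmbedding f.toEmbedding).toEmbedding := by
    ext s
    simp [subset_map_iff, eq_comm]
  simp only [restrict, wedge, hpow, sum_map, RelEmbedding.coe_toEmbedding, mapEmbedding_apply,
    ← Finset.map_sdiff, signMerge_map]

lemma mat2_restrict (f : Fin m ↪o Fin n) (γ : Form 𝕜 n) :
    mat2 (restrict f γ) = (mat2 γ).submatrix f f := by
  ext i j
  simp [mat2, restrict]

lemma wedge_self_univ_four {γ : Form 𝕜 4} (hγ : isGrade 2 γ) :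
    wedge γ γ univ = 2 * (γ {0, 1} * γ {2, 3} - γ {0, 2} * γ {1, 3} + γ {0, 3} * γ {1, 2}) := by
  have huniv : (univ : Finset (Fin 4)) = {0, 1, 2, 3} := by decide
  rw [hγ.wedge_apply, huniv]
  simp +decide only [sdiff_eq_filter, filter_insert, filter_singleton, ite_not, signMerge_eq_ite,
    ite_mul, one_mul, neg_mul, mem_insert, not_false_eq_true, sum_powersetCard_succ_insert,
    true_or, ↓reduceIte, false_or, powersetCard_zero, sum_singleton, insert_empty_eq, zero_add,
    mem_singleton, sum_powersetCard_one, Nat.reduceAdd, powersetCard_add_two_singleton, sum_empty,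
    add_zero, Fin.isValue]
  ring

lemma wedge_self_apply {γ : Form 𝕜 n} (hγ : isGrade 2 γ) {a b c d : Fin n} (hab : a < b)
    (hbc : b < c) (hcd : c < d) :
    wedge γ γ {a, b, c, d} =
      2 * (γ {a, b} * γ {c, d} - γ {a, c} * γ {b, d} + γ {a, d} * γ {b, c}) := by
  have huniv : (univ : Finset (Fin 4)) = {0, 1, 2, 3} := by decide
  let f : Fin 4 ↪o Fin n := OrderEmbedding.ofStrictMono ![a, b, c, d]
    (by simp [Fin.strictMono_iff_lt_succ, Fin.forall_fin_succ, hab, hbc, hcd])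
  have h := congrFun (restrict_wedge f γ γ) univ
  rw [wedge_self_univ_four (hγ.restrict f)] at h
  simpa [restrict, huniv, f] using h

lemma wedge_univ_six {γ : Form 𝕜 6} (hγ : isGrade 2 γ) (β : Form 𝕜 6) :
    wedge γ β univ =
      γ {0, 1} * β {2, 3, 4, 5} - γ {0, 2} * β {1, 3, 4, 5} + γ {0, 3} * β {1, 2, 4, 5}
      - γ {0, 4} * β {1, 2, 3, 5} + γ {0, 5} * β {1, 2, 3, 4} + γ {1, 2} * β {0, 3, 4, 5}
      - γ {1, 3} * β {0, 2, 4, 5} + γ {1, 4} * β {0, 2, 3, 5} - γ {1, 5} * β {0, 2, 3, 4}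
      + γ {2, 3} * β {0, 1, 4, 5} - γ {2, 4} * β {0, 1, 3, 5} + γ {2, 5} * β {0, 1, 3, 4}
      + γ {3, 4} * β {0, 1, 2, 5} - γ {3, 5} * β {0, 1, 2, 4} + γ {4, 5} * β {0, 1, 2, 3} := by
  have huniv : (univ : Finset (Fin 6)) = {0, 1, 2, 3, 4, 5} := by decide
  rw [hγ.wedge_apply, huniv]
  simp +decide only [sdiff_eq_filter, filter_insert, filter_singleton, ite_not, signMerge_eq_ite,
    ite_mul, one_mul, neg_mul, mem_insert, not_false_eq_true, sum_powersetCard_succ_insert,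
    true_or, ↓reduceIte, false_or, powersetCard_zero, sum_singleton, insert_empty_eq, zero_add,
    mem_singleton, sum_powersetCard_one, Nat.reduceAdd, powersetCard_add_two_singleton, sum_empty,
    add_zero, Fin.isValue]
  ring

lemma wedge_wedge_self_univ_six {γ : Form 𝕜 6} (hγ : isGrade 2 γ) :
    wedge γ (wedge γ γ) univ = 6 *
      (γ {0, 1} * (γ {2, 3} * γ {4, 5} - γ {2, 4} * γ {3, 5} + γ {2, 5} * γ {3, 4})
        - γ {0, 2} * (γ {1, 3} * γ {4, 5} - γ {1, 4} * γ {3, 5} + γ {1, 5} * γ {3, 4})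
        + γ {0, 3} * (γ {1, 2} * γ {4, 5} - γ {1, 4} * γ {2, 5} + γ {1, 5} * γ {2, 4})
        - γ {0, 4} * (γ {1, 2} * γ {3, 5} - γ {1, 3} * γ {2, 5} + γ {1, 5} * γ {2, 3})
        + γ {0, 5} * (γ {1, 2} * γ {3, 4} - γ {1, 3} * γ {2, 4} + γ {1, 4} * γ {2, 3})) := by
  simp +decide only [wedge_univ_six hγ, wedge_self_apply hγ]
  ring

lemma mat2_apply_self (γ : Form 𝕜 n) (i : Fin n) : mat2 γ i i = 0 := by
  simp [mat2]

lemma mat2_apply_of_lt (γ : Form 𝕜 n) {i j : Fin n} (h : i < j) : mat2 γ i j = γ {i, j} :=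
  if_pos h

lemma mat2_apply_of_gt (γ : Form 𝕜 n) {i j : Fin n} (h : j < i) : mat2 γ i j = -γ {j, i} := by
  simp [mat2, h, h.not_gt, pair_comm]

lemma transpose_mat2 (γ : Form 𝕜 n) : (mat2 γ).transpose = -mat2 γ := by
  ext i j
  obtain h | rfl | h := lt_trichotomy i j
  · simp [mat2_apply_of_lt, mat2_apply_of_gt, h]
  · simp [mat2_apply_self]
  · simp [mat2_apply_of_lt, mat2_apply_of_gt, h]

lemma det_mat2_of_odd [CharZero 𝕜] (hn : Odd n) (γ : Form 𝕜 n) : (mat2 γ).det = 0 := by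
  rw [← CharZero.eq_neg_self_iff]
  calc (mat2 γ).det = (mat2 γ).transpose.det := (Matrix.det_transpose _).symm
    _ = -(mat2 γ).det := by
      rw [transpose_mat2, Matrix.det_neg, Fintype.card_fin, hn.neg_one_pow, neg_one_mul]

lemma det_mat2_two (γ : Form 𝕜 2) : (mat2 γ).det = γ univ ^ 2 := by
  have huniv : (univ : Finset (Fin 2)) = {0, 1} := by decide
  rw [Matrix.det_fin_two, mat2_apply_self, mat2_apply_self, mat2_apply_of_lt γ zero_lt_one,
    mat2_apply_of_gt γ zero_lt_one, huniv]
  ring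

lemma four_mul_det_mat2 {γ : Form 𝕜 4} (hγ : isGrade 2 γ) :
    4 * (mat2 γ).det = wedge γ γ univ ^ 2 := by
  have hmat : mat2 γ = !![0, γ {0, 1}, γ {0, 2}, γ {0, 3};
      -γ {0, 1}, 0, γ {1, 2}, γ {1, 3};
      -γ {0, 2}, -γ {1, 2}, 0, γ {2, 3};
      -γ {0, 3}, -γ {1, 3}, -γ {2, 3}, 0] := by
    ext i j
    fin_cases i <;> fin_cases j <;> first
      | exact mat2_apply_self _ _
      | exact mat2_apply_of_lt _ (by decide)
      | exact mat2_apply_of_gt _ (by decide)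
  simp only [hmat, norm_det, wedge_self_univ_four hγ]
  ring

lemma thirtySix_mul_det_mat2 {γ : Form 𝕜 6} (hγ : isGrade 2 γ) :
    36 * (mat2 γ).det = wedge γ (wedge γ γ) univ ^ 2 := by
  have hmat : mat2 γ = !![0, γ {0, 1}, γ {0, 2}, γ {0, 3}, γ {0, 4}, γ {0, 5};
      -γ {0, 1}, 0, γ {1, 2}, γ {1, 3}, γ {1, 4}, γ {1, 5};
      -γ {0, 2}, -γ {1, 2}, 0, γ {2, 3}, γ {2, 4}, γ {2, 5};
      -γ {0, 3}, -γ {1, 3}, -γ {2, 3}, 0, γ {3, 4}, γ {3, 5};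
      -γ {0, 4}, -γ {1, 4}, -γ {2, 4}, -γ {3, 4}, 0, γ {4, 5};
      -γ {0, 5}, -γ {1, 5}, -γ {2, 5}, -γ {3, 5}, -γ {4, 5}, 0] := by
    ext i j
    fin_cases i <;> fin_cases j <;> first
      | exact mat2_apply_self _ _
      | exact mat2_apply_of_lt _ (by decide)
      | exact mat2_apply_of_gt _ (by decide)
  simp only [hmat, norm_det, wedge_wedge_self_univ_six hγ]
  ring

lemma det_mat2_of_le_seven [CharZero 𝕜] (hn : n ≤ 7) {γ : Form 𝕜 n} (hγ : isGrade 2 γ) :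
    (mat2 γ).det = (if n = 0 then 1 else 0) + γ univ ^ 2 + wedge γ γ univ ^ 2 / 4
      + wedge γ (wedge γ γ) univ ^ 2 / 36 := by
  have h2 : n ≠ 2 → γ univ = 0 := fun h => hγ univ (by rwa [card_fin])
  have h4 : n ≠ 4 → wedge γ γ univ = 0 := fun h => hγ.wedge hγ univ (by rwa [card_fin])
  have h6 : n ≠ 6 → wedge γ (wedge γ γ) univ = 0 := fun h =>
    hγ.wedge (hγ.wedge hγ) univ (by rwa [card_fin])
  obtain hodd | heven := n.even_or_odd.symm
  · have hn : n ≠ 0 ∧ n ≠ 2 ∧ n ≠ 4 ∧ n ≠ 6 := by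
      refine ⟨?_, ?_, ?_, ?_⟩ <;> rintro rfl <;> exact absurd hodd (by decide)
    simp [det_mat2_of_odd hodd, h2, h4, h6, hn]
  · obtain rfl | rfl | rfl | rfl : n = 0 ∨ n = 2 ∨ n = 4 ∨ n = 6 := by grind
    · rw [h2 (by decide), h4 (by decide), h6 (by decide)]
      simp
    · simp [h4, h6, det_mat2_two]
    · simp [h2, h6, ← four_mul_det_mat2 hγ]
    · simp [h2, h4, ← thirtySix_mul_det_mat2 hγ]

lemma principal_minor_mat2 (γ : Form 𝕜 n) {s : Finset (Fin n)} (hs : #s = k) :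
    ((mat2 γ).submatrix ((↑) : s → Fin n) (↑)).det =
      (mat2 (restrict (s.orderEmbOfFin hs) γ)).det := by
  rw [mat2_restrict, ← Matrix.det_submatrix_equiv_self (s.orderIsoOfFin hs).toEquiv]
  rfl

lemma det_one_add_mat2_of_le_seven [CharZero 𝕜] (hn : n ≤ 7) {γ : Form 𝕜 n}
    (hγ : isGrade 2 γ) :
    (1 + mat2 γ).det = 1 + inner' γ γ + inner' (wedge γ γ) (wedge γ γ) / 4
      + inner' (wedge γ (wedge γ γ)) (wedge γ (wedge γ γ)) / 36 := by
  have hminor (s : Finset (Fin n)) : ((mat2 γ).submatrix ((↑) : s → Fin n) (↑)).det =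
      (if s = ∅ then 1 else 0) + γ s ^ 2 + wedge γ γ s ^ 2 / 4
        + wedge γ (wedge γ γ) s ^ 2 / 36 := by
    rw [principal_minor_mat2 γ rfl,
      det_mat2_of_le_seven ((card_finset_fin_le s).trans hn) (hγ.restrict _)]
    simp only [← restrict_wedge, restrict_orderEmbOfFin_univ, card_eq_zero]
  simp only [det_one_add_eq_sum_principal_minors, hminor, sum_add_distrib, sum_ite_eq',
    mem_univ, if_true, ← sum_div, inner', ← sq]

lemma phi7_eq_sum_single : (phi7 : Form 𝕜 7) =
    Pi.single {0, 1, 2} 1 + Pi.single {0, 3, 4} 1 + Pi.single {0, 5, 6} 1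
      + Pi.single {1, 3, 5} 1 - Pi.single {1, 4, 6} 1 - Pi.single {2, 3, 6} 1
      - Pi.single {2, 4, 5} 1 := by
  funext s
  unfold phi7
  split_ifs <;> simp_all +decide

lemma psi7_eq_sum_single : (psi7 : Form 𝕜 7) =
    Pi.single {3, 4, 5, 6} 1 + Pi.single {1, 2, 5, 6} 1 + Pi.single {1, 2, 3, 4} 1
      + Pi.single {0, 2, 4, 6} 1 - Pi.single {0, 2, 3, 5} 1 - Pi.single {0, 1, 4, 5} 1
      - Pi.single {0, 1, 3, 6} 1 := by
  funext s
  unfold psi7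
  split_ifs <;> simp_all +decide

lemma isGrade_phi7 : isGrade 3 (phi7 : Form 𝕜 7) := by
  intro s hs
  unfold phi7
  split_ifs <;> first | rfl | (subst s; exact absurd rfl hs)

lemma isGrade_psi7 : isGrade 4 (psi7 : Form 𝕜 7) := by
  intro s hs
  unfold psi7
  split_ifs <;> first | rfl | (subst s; exact absurd rfl hs)

lemma inner'_psi7 (β : Form 𝕜 7) :
    inner' β psi7 = β {3, 4, 5, 6} + β {1, 2, 5, 6} + β {1, 2, 3, 4} + β {0, 2, 4, 6}
      - β {0, 2, 3, 5} - β {0, 1, 4, 5} - β {0, 1, 3, 6} := by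
  simp [inner', psi7_eq_sum_single, mul_add, mul_sub, sum_add_distrib, Pi.single_apply]

lemma wedge_psi7_compl_singleton (γ : Form 𝕜 7) (i : Fin 7) :
    wedge psi7 γ {i}ᶜ =
      ![γ {1, 2} + γ {3, 4} + γ {5, 6}, γ {0, 2} - γ {3, 5} + γ {4, 6},
        γ {0, 1} - γ {3, 6} - γ {4, 5}, γ {0, 4} + γ {1, 5} - γ {2, 6},
        γ {0, 3} + γ {1, 6} + γ {2, 5}, γ {0, 6} - γ {1, 3} + γ {2, 4},
        γ {0, 5} - γ {1, 4} - γ {2, 3}] i := by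
  simp only [psi7_eq_sum_single, wedge_add_left, wedge_sub_left, Pi.add_apply, Pi.sub_apply,
    wedge_single_apply]
  -- `rfl` evaluates the complementary index sets, such as `{0}ᶜ \ {3, 4, 5, 6} = {1, 2}`.
  fin_cases i <;> simp +decide [signMerge_eq_ite, ← sub_eq_add_neg] <;> rfl

lemma wedge_phi7_hstar_compl_singleton (β : Form 𝕜 7) (i : Fin 7) :
    wedge phi7 (hstar β) {i}ᶜ =
      ![β {0, 1, 3, 5} - β {0, 1, 4, 6} - β {0, 2, 3, 6} - β {0, 2, 4, 5},
        β {0, 1, 3, 4} + β {0, 1, 5, 6} + β {1, 2, 3, 6} + β {1, 2, 4, 5},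
        -β {0, 2, 3, 4} - β {0, 2, 5, 6} - β {1, 2, 3, 5} + β {1, 2, 4, 6},
        β {0, 1, 2, 3} + β {0, 3, 5, 6} - β {1, 3, 4, 6} - β {2, 3, 4, 5},
        -β {0, 1, 2, 4} - β {0, 4, 5, 6} + β {1, 3, 4, 5} - β {2, 3, 4, 6},
        β {0, 1, 2, 5} + β {0, 3, 4, 5} + β {1, 4, 5, 6} + β {2, 3, 5, 6},
        -β {0, 1, 2, 6} - β {0, 3, 4, 6} - β {1, 3, 5, 6} + β {2, 4, 5, 6}] i := by
  simp only [phi7_eq_sum_single, wedge_add_left, wedge_sub_left, Pi.add_apply, Pi.sub_apply,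
    wedge_single_apply, hstar]
  fin_cases i <;> simp +decide [signMerge_eq_ite, ← sub_eq_add_neg] <;> rfl

lemma univ_fin_seven : (univ : Finset (Fin 7)) = {0, 1, 2, 3, 4, 5, 6} := by decide

lemma inner'_wedge_psi7_self {γ : Form 𝕜 7} (hγ : isGrade 2 γ) :
    inner' (wedge psi7 γ) (wedge psi7 γ) = inner' γ γ + inner' (wedge γ γ) psi7 := by
  rw [inner'_psi7, (isGrade_psi7.wedge hγ).inner'_eq_sum_compl_singleton,
    hγ.inner'_eq_sum_powersetCard, univ_fin_seven]
  simp +decide only [Fin.isValue, Nat.reduceAdd, wedge_psi7_compl_singleton, Nat.succ_eq_add_one,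
    mem_insert, not_false_eq_true, sum_insert, Matrix.cons_val_zero, Matrix.cons_val_one,
    Matrix.cons_val, mem_singleton, sum_singleton, sum_powersetCard_succ_insert,
    powersetCard_zero, insert_empty_eq, zero_add, sum_powersetCard_one,
    powersetCard_add_two_singleton, sum_empty, add_zero, Fin.reduceLT, wedge_self_apply hγ,
    zero_lt_one]
  ring

lemma inner'_wedge_phi7_hstar_wedge_self {γ : Form 𝕜 7} (hγ : isGrade 2 γ) :
    3 * inner' (wedge phi7 (hstar (wedge γ γ))) (wedge phi7 (hstar (wedge γ γ))) =
      3 * inner' (wedge γ γ) (wedge γ γ) - 3 * inner' (wedge γ γ) psi7 ^ 2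
        + 4 * inner' (wedge psi7 γ) (wedge γ (wedge γ γ)) := by
  have hcube (i : Fin 7) : wedge γ (wedge γ γ) {i}ᶜ =
      wedge (restrict i.succAboveOrderEmb γ)
        (wedge (restrict i.succAboveOrderEmb γ) (restrict i.succAboveOrderEmb γ)) univ := by
    rw [← restrict_wedge, ← restrict_wedge, restrict_succAboveOrderEmb_univ]
  rw [inner'_psi7, (isGrade_psi7.wedge hγ).inner'_eq_sum_compl_singleton,
    (isGrade_phi7.wedge ((hγ.wedge hγ).hstar (l := 3) rfl)).inner'_eq_sum_compl_singleton,
    (hγ.wedge hγ).inner'_eq_sum_powersetCard, univ_fin_seven]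
  simp +decide only [Fin.isValue, Nat.reduceAdd, wedge_phi7_hstar_compl_singleton,
    Nat.succ_eq_add_one, zero_lt_one, Fin.reduceLT, wedge_self_apply hγ, mem_insert,
    not_false_eq_true, sum_insert, Matrix.cons_val_zero, Matrix.cons_val_one, Matrix.cons_val,
    mem_singleton, sum_singleton, sum_powersetCard_succ_insert, powersetCard_zero,
    insert_empty_eq, zero_add, sum_powersetCard_one, powersetCard_add_two_singleton, sum_empty,
    add_zero, wedge_psi7_compl_singleton, hcube, wedge_wedge_self_univ_six (hγ.restrict _),
    restrict_pair, Fin.succAboveOrderEmb_apply, Fin.succAbove, Fin.castSucc_zero,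
    Fin.succ_zero_eq_one, Fin.castSucc_one, Fin.succ_one_eq_two, Fin.reduceCastSucc,
    Fin.reduceSucc, ↓reduceIte]
  ring

lemma mirror_associator_equality_real [CharZero 𝕜] {γ : Form 𝕜 7} (hγ : isGrade 2 γ) :
    (1 - inner' (wedge γ γ) psi7 / 2) ^ 2
      + inner' (wedge psi7 γ - (6 : 𝕜)⁻¹ • wedge γ (wedge γ γ))
          (wedge psi7 γ - (6 : 𝕜)⁻¹ • wedge γ (wedge γ γ))
      + inner' (wedge phi7 (hstar (wedge γ γ))) (wedge phi7 (hstar (wedge γ γ))) / 4 =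
    (1 + mat2 γ).det := by
  rw [det_one_add_mat2_of_le_seven le_rfl hγ, inner'_sub_smul_self]
  linear_combination inner'_wedge_psi7_self hγ + inner'_wedge_phi7_hstar_wedge_self hγ / 12

end Forms

section Complexification

/-- The complexification of a real form, so that the `√-1 ℝ`-valued form `√-1 γ` is
`Complex.I • complexify γ`. -/
def complexify (α : Form ℝ n) : Form ℂ n := fun s => (α s : ℂ)

lemma wedge_complexify (α β : Form ℝ n) :
    wedge (complexify α) (complexify β) = complexify (wedge α β) := by
  ext u
  simp [wedge, complexify, signMerge]

lemma hstar_complexify (α : Form ℝ n) : hstar (complexify α) = complexify (hstar α) := by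
  ext u
  simp [hstar, complexify, signMerge]

lemma inner'_complexify (α β : Form ℝ n) :
    inner' (complexify α) (complexify β) = ((inner' α β : ℝ) : ℂ) := by
  simp [inner', complexify]

lemma complexify_phi7 : complexify phi7 = phi7 := by
  ext s
  simp only [complexify, phi7]
  split_ifs <;> simp

lemma complexify_psi7 : complexify psi7 = psi7 := by
  ext s
  simp only [complexify, psi7]
  split_ifs <;> simp

lemma fnorm_smul_complexify_sq (c : ℂ) (α : Form ℝ n) :
    fnorm (c • complexify α) ^ 2 = ‖c‖ ^ 2 * inner' α α := by
  rw [fnorm, Real.sq_sqrt (by positivity), inner', Finset.mul_sum]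
  exact Finset.sum_congr rfl fun s _ => by simp [complexify, mul_pow, ← sq]

end Complexification

theorem statement7_general {γ : Form ℝ 7} (hγ : isGrade 2 γ) {F : Form ℂ 7}
    (hF : F = Complex.I • complexify γ) :
    (1 + (2 : ℂ)⁻¹ * inner' (wedge F F) psi7) ^ 2
      + (fnorm (wedge psi7 F + (6 : ℂ)⁻¹ • wedge F (wedge F F)) : ℂ) ^ 2
      + (4 : ℂ)⁻¹ * (fnorm (wedge phi7 (hstar (wedge F F))) : ℂ) ^ 2 =
    ((1 + mat2 γ).det : ℂ) := by
  have hsq : wedge F F = (-1 : ℂ) • complexify (wedge γ γ) := by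
    rw [hF, wedge_smul_left, wedge_smul_right, smul_smul, Complex.I_mul_I, wedge_complexify]
  have hinner : inner' (wedge F F) psi7 = -((inner' (wedge γ γ) psi7 : ℝ) : ℂ) := by
    rw [hsq, ← complexify_psi7, ← inner'_complexify]
    simp [inner']
  have hcube : wedge psi7 F + (6 : ℂ)⁻¹ • wedge F (wedge F F) =
      Complex.I • complexify (wedge psi7 γ - (6 : ℝ)⁻¹ • wedge γ (wedge γ γ)) := by
    rw [hsq, hF, wedge_smul_right, wedge_smul_left, wedge_smul_right, ← complexify_psi7,
      wedge_complexify, wedge_complexify]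
    ext s
    simp only [complexify, Pi.add_apply, Pi.sub_apply, Pi.smul_apply, smul_eq_mul,
      Complex.ofReal_sub, Complex.ofReal_mul, Complex.ofReal_inv, Complex.ofReal_ofNat]
    ring
  have hphi : wedge phi7 (hstar (wedge F F)) =
      (-1 : ℂ) • complexify (wedge phi7 (hstar (wedge γ γ))) := by
    rw [hsq, hstar_smul, wedge_smul_right, hstar_complexify, ← complexify_phi7, wedge_complexify]
  rw [hinner, hcube, hphi, ← mirror_associator_equality_real hγ, ← Complex.ofReal_pow,
    ← Complex.ofReal_pow, fnorm_smul_complexify_sq, fnorm_smul_complexify_sq, Complex.norm_I,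
    norm_neg, norm_one]
  push_cast
  ring

/-- Lemma 4.3, the mirror associator equality.  At every point of `B`:
`(1 + ½⟨(F_∇^S)², *₇φ⟩)² + ‖*₇φ ∧ F_∇^S + (1/6)(F_∇^S)³‖² + ¼‖φ ∧ *₇((F_∇^S)²)‖²
  = det(id + (-√-1 F_∇^S)♯)`. -/
theorem statement7 (B : Set (Fin 3 → ℝ)) (hB : IsOpen B)
    (f : (Fin 3 → ℝ) → (Fin 4 → ℝ)) (hf : ContDiffOn ℝ (⊤ : ℕ∞) f B) :
    ∀ x ∈ B,
      (1 + (2 : ℂ)⁻¹ * inner' (wedge (FSA f x) (FSA f x)) psi7) ^ 2 +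
        (fnorm (wedge psi7 (FSA f x) + (6 : ℂ)⁻¹ •
          wedge (FSA f x) (wedge (FSA f x) (FSA f x))) : ℂ) ^ 2 +
        (4 : ℂ)⁻¹ * (fnorm (wedge phi7 (hstar (wedge (FSA f x) (FSA f x)))) : ℂ) ^ 2 =
      (((1 : Matrix (Fin 7) (Fin 7) ℝ) + mat2 (gammaA f x)).det : ℂ) :=
  fun x _ => statement7_general (isGrade_gammaA f x) rfl

end FMpaper
end
end
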